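/- arXiv:math/0207081 — 2 statements merged into one kernel-verified Lean document; each statement's English description precedes it below -/
import Mathlib

section
/- Let k be an algebraically closed complete non-Archimedean valued field and let f = Σ_{n∈ℤ} aₙ zⁿ be a Laurent series with |aₙ| rⁿ → 0 as n → +∞ and |aₙ| tⁿ → 0 as n → −∞ for every t > 0 (so f is analytic on the punctured disc 0 < |z| ≤ r). If aₙ ≠ 0 for infinitely many negative n, then f has infinitely many zeros z ∈ k with 0 < |z| ≤ r. -/
open Filter

/-!
On the circle `|z| = ρ` an ultrametric series is governed by its largest terms. If the terms
`|aₙ| ρ ^ n` are maximal first at `n = i` and last at `n = j`, the Newton polygon has an edge of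
slope `log ρ` and width `j - i`; for a polynomial it counts the roots of absolute value `ρ`, and
`|p(w)| = M ∏ |w - α| / ρ` over these roots whenever `|w| = ρ`. Hence if `p(w)` is small and
`i < j`, some root `α` on the circle is close to `w`. Applied to longer and longer truncations of
`f` this yields a Cauchy sequence on the circle along which `f` tends to `0`, so `f` has a zero
there. Infinitely many negative terms force such edges at arbitrarily small radii: let `m` be the
first index of a maximal term at radius `ε` and shrink the radius; the first radius at which a term
of index `< m` catches up with the term of index `m` is smaller than `ε`.
-/

open Polynomial Topology

/-- `g` has maximum `M`, attained for the first time at `i` and for the last time at `j`. Applied to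
the sizes `‖aₙ‖ ρ ^ n` of the terms of a series on `‖z‖ = ρ`, the interval `[i, j]` is the
horizontal extent of the edge of slope `log ρ` of the Newton polygon, the lower convex hull of the
points `(n, -log ‖aₙ‖)`. -/
structure IsPeakRange {ι α : Type*} [Preorder ι] [Preorder α] (g : ι → α) (M : α) (i j : ι) :
    Prop where
  le_max : ∀ n, g n ≤ M
  apply_first : g i = M
  apply_last : g j = M
  lt_of_lt_first : ∀ n, n < i → g n < M
  lt_of_last_lt : ∀ n, j < n → g n < M

section PeakRange

variable {ι α : Type*} [LinearOrder ι] [LinearOrder α] {g : ι → α} {M M' : α} {i i' j j' m n : ι}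

theorem IsPeakRange.first_le (h : IsPeakRange g M i j) (hn : g n = M) : i ≤ n :=
  not_lt.1 fun hlt ↦ (h.lt_of_lt_first n hlt).ne hn

theorem IsPeakRange.le_last (h : IsPeakRange g M i j) (hn : g n = M) : n ≤ j :=
  not_lt.1 fun hlt ↦ (h.lt_of_last_lt n hlt).ne hn

theorem IsPeakRange.pos [NoMaxOrder ι] {g : ι → ℝ} {M : ℝ} (h : IsPeakRange g M i j)
    (hg : ∀ n, 0 ≤ g n) : 0 < M :=
  have ⟨n, hn⟩ := exists_gt j
  (hg n).trans_lt (h.lt_of_last_lt n hn)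

theorem IsPeakRange.unique (h : IsPeakRange g M i j) (h' : IsPeakRange g M' i' j') :
    M = M' ∧ i = i' ∧ j = j' := by
  have hM : M = M' :=
    le_antisymm (h.apply_first ▸ h'.le_max i) (h'.apply_first ▸ h.le_max i')
  subst hM
  exact ⟨rfl, le_antisymm (h.first_le h'.apply_first) (h'.first_le h.apply_first),
    le_antisymm (h'.le_last h.apply_last) (h.le_last h'.apply_last)⟩

theorem IsPeakRange.mul_const {g : ι → ℝ} {M c : ℝ} (h : IsPeakRange g M i j) (hc : 0 < c) :
    IsPeakRange (fun n ↦ g n * c) (M * c) i j where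
  le_max n := mul_le_mul_of_nonneg_right (h.le_max n) hc.le
  apply_first := by rw [h.apply_first]
  apply_last := by rw [h.apply_last]
  lt_of_lt_first n hn := mul_lt_mul_of_pos_right (h.lt_of_lt_first n hn) hc
  lt_of_last_lt n hn := mul_lt_mul_of_pos_right (h.lt_of_last_lt n hn) hc

theorem IsPeakRange.ite_mem [DecidableEq ι] [Zero α] (h : IsPeakRange g M i j) (hM : 0 < M)
    {s : Finset ι} (hi : i ∈ s) (hj : j ∈ s) :
    IsPeakRange (fun n ↦ if n ∈ s then g n else 0) M i j where
  le_max n := by split_ifs; exacts [h.le_max n, hM.le]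
  apply_first := by rw [if_pos hi, h.apply_first]
  apply_last := by rw [if_pos hj, h.apply_last]
  lt_of_lt_first n hn := by split_ifs; exacts [h.lt_of_lt_first n hn, hM]
  lt_of_last_lt n hn := by split_ifs; exacts [h.lt_of_last_lt n hn, hM]

theorem IsPeakRange.comp_natCast_sub {g : ℤ → α} {i j : ℤ} (h : IsPeakRange g M i j) {N : ℕ}
    (hi : -N ≤ i) (hj : -N ≤ j) :
    IsPeakRange (fun m : ℕ ↦ g (m - N)) M (i + N).toNat (j + N).toNat where
  le_max _ := h.le_max _
  apply_first := by rw [Int.toNat_of_nonneg (by omega), add_sub_cancel_right, h.apply_first]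
  apply_last := by rw [Int.toNat_of_nonneg (by omega), add_sub_cancel_right, h.apply_last]
  lt_of_lt_first _ _ := h.lt_of_lt_first _ (by omega)
  lt_of_last_lt _ _ := h.lt_of_last_lt _ (by omega)

theorem exists_isPeakRange_of_tendsto_cofinite_zero {g : ι → ℝ} (hg : Tendsto g cofinite (𝓝 0))
    (hn : 0 < g n) : ∃ M i j, IsPeakRange g M i j := by
  have finite_superlevel {x : ℝ} (hx : 0 < x) : {m | x ≤ g m}.Finite := by
    simpa using eventually_cofinite.1 (hg.eventually (gt_mem_nhds hx))
  obtain ⟨m, hnm, hm⟩ := Set.exists_max_image _ g (finite_superlevel hn) ⟨n, le_refl (g n)⟩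
  have hmax (l : ι) : g l ≤ g m := (le_total (g n) (g l)).elim (hm l) fun h ↦ h.trans hnm
  have hpos : 0 < g m := hn.trans_le hnm
  obtain ⟨i, hi, hfirst⟩ := Set.exists_min_image _ id (finite_superlevel hpos) ⟨m, le_refl (g m)⟩
  obtain ⟨j, hj, hlast⟩ := Set.exists_max_image _ id (finite_superlevel hpos) ⟨m, le_refl (g m)⟩
  exact ⟨g m, i, j, hmax, (hmax i).antisymm hi, (hmax j).antisymm hj,
    fun l hl ↦ not_le.1 fun h ↦ hl.not_ge (hfirst l h),
    fun l hl ↦ not_le.1 fun h ↦ hl.not_ge (hlast l h)⟩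

theorem exists_lt_isPeakRange_of_apply_eq {g : ι → ℝ} (hg : Tendsto g cofinite (𝓝 0))
    (hm : 0 < g m) (hnm : n < m) (heq : g n = g m) (hle : ∀ l, g l ≤ g m) :
    ∃ M i j, i < j ∧ IsPeakRange g M i j := by
  obtain ⟨M, i, j, h⟩ := exists_isPeakRange_of_tendsto_cofinite_zero hg hm
  have hmM : g m = M := (h.le_max m).antisymm (h.apply_first ▸ hle i)
  exact ⟨M, i, j, (h.first_le (heq.trans hmM)).trans_lt (hnm.trans_le (h.le_last hmM)), h⟩

end PeakRange

theorem mul_lt_mul_of_lt_or_lt {x y a b : ℝ} (hx : 0 ≤ x) (hy : 0 ≤ y) (ha : 0 < a) (hb : 0 < b)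
    (hxa : x ≤ a) (hyb : y ≤ b) (h : x < a ∨ y < b) : x * y < a * b := by
  rcases h with h | h
  · exact (mul_le_mul_of_nonneg_left hyb hx).trans_lt (mul_lt_mul_of_pos_right h hb)
  · exact mul_lt_mul' hxa h hy ha

section Mul

open Finset.HasAntidiagonal (antidiagonal mem_antidiagonal)

variable {R : Type*} [NormedRing R] {ρ : ℝ}

theorem isNonarchimedean_norm_mul_const [IsUltrametricDist R] {c : ℝ} (hc : 0 ≤ c) :
    IsNonarchimedean fun a : R ↦ ‖a‖ * c := fun a b ↦ by
  rw [← max_mul_of_nonneg _ _ hc]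
  exact mul_le_mul_of_nonneg_right (IsUltrametricDist.norm_add_le_max a b) hc

variable [NormMulClass R]

theorem norm_coeff_mul_coeff_mul_pow (p q : R[X]) {n : ℕ} {x : ℕ × ℕ}
    (hx : x ∈ antidiagonal n) :
    ‖p.coeff x.1 * q.coeff x.2‖ * ρ ^ n =
      (‖p.coeff x.1‖ * ρ ^ x.1) * (‖q.coeff x.2‖ * ρ ^ x.2) := by
  rw [← mem_antidiagonal.1 hx, norm_mul, pow_add]
  ring

variable [IsUltrametricDist R]

theorem exists_mem_antidiagonal_norm_coeff_mul_le (p q : R[X]) (hρ : 0 ≤ ρ) (n : ℕ) :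
    ∃ x ∈ antidiagonal n, ‖(p * q).coeff n‖ * ρ ^ n ≤
      (‖p.coeff x.1‖ * ρ ^ x.1) * (‖q.coeff x.2‖ * ρ ^ x.2) := by
  obtain ⟨x, hx, hle⟩ :=
    (isNonarchimedean_norm_mul_const (R := R) (pow_nonneg hρ n)).finset_image_add_of_nonempty
      (fun x : ℕ × ℕ ↦ p.coeff x.1 * q.coeff x.2) (t := antidiagonal n)
      ⟨(0, n), by simp⟩
  rw [norm_coeff_mul_coeff_mul_pow p q hx, ← coeff_mul] at hle
  exact ⟨x, hx, hle⟩

theorem norm_coeff_mul_eq_of_forall_lt {p q : R[X]} (hρ : 0 ≤ ρ) {i j : ℕ}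
    (h : ∀ x ∈ antidiagonal (i + j), x ≠ (i, j) →
      (‖p.coeff x.1‖ * ρ ^ x.1) * (‖q.coeff x.2‖ * ρ ^ x.2) <
        (‖p.coeff i‖ * ρ ^ i) * (‖q.coeff j‖ * ρ ^ j)) :
    ‖(p * q).coeff (i + j)‖ * ρ ^ (i + j) =
      (‖p.coeff i‖ * ρ ^ i) * (‖q.coeff j‖ * ρ ^ j) := by
  have hij : (i, j) ∈ antidiagonal (i + j) := mem_antidiagonal.2 rfl
  rw [← norm_coeff_mul_coeff_mul_pow p q hij, coeff_mul]
  refine (isNonarchimedean_norm_mul_const (R := R) (pow_nonneg hρ (i + j))).apply_sum_eq_of_lt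
    (fun a ↦ by rw [norm_neg]) hij fun x hx hne ↦ ?_
  rw [norm_coeff_mul_coeff_mul_pow p q hx, norm_coeff_mul_coeff_mul_pow p q hij]
  exact h x hx hne

theorem IsPeakRange.coeff_mul {p q : R[X]} (hρ : 0 ≤ ρ) {M M' : ℝ} {i i' j j' : ℕ}
    (hp : IsPeakRange (fun n ↦ ‖p.coeff n‖ * ρ ^ n) M i j)
    (hq : IsPeakRange (fun n ↦ ‖q.coeff n‖ * ρ ^ n) M' i' j') :
    IsPeakRange (fun n ↦ ‖(p * q).coeff n‖ * ρ ^ n) (M * M') (i + i') (j + j') := by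
  have hM := hp.pos fun n ↦ by positivity
  have hM' := hq.pos fun n ↦ by positivity
  have term_lt (x : ℕ × ℕ)
      (h : (x.1 < i ∨ x.2 < i') ∨ j < x.1 ∨ j' < x.2) :
      (‖p.coeff x.1‖ * ρ ^ x.1) * (‖q.coeff x.2‖ * ρ ^ x.2) < M * M' :=
    mul_lt_mul_of_lt_or_lt (by positivity) (by positivity) hM hM' (hp.le_max _) (hq.le_max _) <| by
      rcases h with (h | h) | (h | h)
      exacts [.inl (hp.lt_of_lt_first _ h), .inr (hq.lt_of_lt_first _ h),
        .inl (hp.lt_of_last_lt _ h), .inr (hq.lt_of_last_lt _ h)]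
  have term_le (x : ℕ × ℕ) :
      (‖p.coeff x.1‖ * ρ ^ x.1) * (‖q.coeff x.2‖ * ρ ^ x.2) ≤ M * M' :=
    mul_le_mul (hp.le_max _) (hq.le_max _) (by positivity) hM.le
  have coeff_lt (n : ℕ) (hn : n < i + i' ∨ j + j' < n) : ‖(p * q).coeff n‖ * ρ ^ n < M * M' := by
    obtain ⟨x, hx, hle⟩ := exists_mem_antidiagonal_norm_coeff_mul_le p q hρ n
    have := mem_antidiagonal.1 hx
    exact hle.trans_lt (term_lt x (by omega))
  refine ⟨fun n ↦ ?_, ?_, ?_, fun n hn ↦ coeff_lt n (.inl hn), fun n hn ↦ coeff_lt n (.inr hn)⟩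
  · obtain ⟨x, -, hle⟩ := exists_mem_antidiagonal_norm_coeff_mul_le p q hρ n
    exact hle.trans (term_le x)
  · have eq_max := congrArg₂ (· * ·) hp.apply_first hq.apply_first
    refine (norm_coeff_mul_eq_of_forall_lt hρ fun x hx hne ↦ ?_).trans eq_max
    have := mem_antidiagonal.1 hx
    exact (term_lt x (by rw [ne_eq, Prod.ext_iff] at hne; omega)).trans_eq eq_max.symm
  · have eq_max := congrArg₂ (· * ·) hp.apply_last hq.apply_last
    refine (norm_coeff_mul_eq_of_forall_lt hρ fun x hx hne ↦ ?_).trans eq_max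
    have := mem_antidiagonal.1 hx
    exact (term_lt x (by rw [ne_eq, Prod.ext_iff] at hne; omega)).trans_eq eq_max.symm

end Mul

section Multiset

theorem countP_lt_add_card_filter_eq {ι α : Type*} [LinearOrder α] (s : Multiset ι) (f : ι → α)
    (c : α) : s.countP (f · < c) + (s.filter (f · = c)).card = s.countP (f · ≤ c) := by
  induction s using Multiset.induction_on with
  | empty => simp
  | cons x s ih =>
    rcases lt_trichotomy (f x) c with h | h | h
    · simp [h, h.ne, h.le]; omega
    · simp [h]; omega
    · simp [h.ne', h.not_ge, h.not_gt, ih]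

theorem exists_mem_pow_card_le_prod_map {ι : Type*} {s : Multiset ι} (hs : s ≠ 0) {f : ι → ℝ}
    (hf : ∀ i, 0 ≤ f i) : ∃ i ∈ s, f i ^ s.card ≤ (s.map f).prod := by
  classical
  obtain ⟨i, hi, hmin⟩ := s.toFinset.exists_min_image f (by simpa using hs)
  refine ⟨i, Multiset.mem_toFinset.1 hi, ?_⟩
  simpa using Multiset.prod_map_le_prod_map₀ (fun _ ↦ f i) f (fun _ _ ↦ hf i)
    fun m hm ↦ hmin m (Multiset.mem_toFinset.2 hm)

end Multiset

section Split

variable {k : Type*} [NormedField k] {ρ : ℝ}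

theorem isPeakRange_coeff_C {c : k} (hc : c ≠ 0) :
    IsPeakRange (fun n ↦ ‖(C c).coeff n‖ * ρ ^ n) ‖c‖ 0 0 := by
  refine ⟨fun n ↦ ?_, by simp, by simp, by simp, fun n hn ↦ ?_⟩
  · rcases eq_or_ne n 0 with rfl | hn <;> simp [coeff_C, *]
  · simpa [coeff_C, hn.ne'] using hc

theorem isPeakRange_coeff_X_sub_C (hρ : 0 < ρ) (α : k) :
    IsPeakRange (fun n ↦ ‖(X - C α).coeff n‖ * ρ ^ n) (max ρ ‖α‖)
      (if ‖α‖ < ρ then 1 else 0) (if ‖α‖ ≤ ρ then 1 else 0) := by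
  have norm_coeff (n : ℕ) : ‖(X - C α).coeff n‖ * ρ ^ n =
      if n = 0 then ‖α‖ else if n = 1 then ρ else 0 := by
    rcases n with _ | _ | n <;> simp [coeff_X, coeff_C]
  simp only [norm_coeff]
  refine ⟨fun n ↦ ?_, ?_, ?_, fun n hn ↦ ?_, fun n hn ↦ ?_⟩
  · split_ifs <;> simp [hρ.le]
  · split_ifs with h <;> simp_all [le_of_lt]
  · split_ifs with h <;> simp_all [le_of_lt]
  · split_ifs at hn with h
    · simp_all
    · omega
  · split_ifs at hn with h
    · simp [show n ≠ 0 by omega, show n ≠ 1 by omega, hρ]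
    · split_ifs <;> simp_all

variable [IsUltrametricDist k]

theorem isPeakRange_coeff_prod_X_sub_C (hρ : 0 < ρ) (s : Multiset k) :
    IsPeakRange (fun n ↦ ‖((s.map fun α ↦ X - C α).prod).coeff n‖ * ρ ^ n)
      (s.map fun α ↦ max ρ ‖α‖).prod (s.countP (‖·‖ < ρ)) (s.countP (‖·‖ ≤ ρ)) := by
  induction s using Multiset.induction_on with
  | empty => simpa using isPeakRange_coeff_C (k := k) (ρ := ρ) one_ne_zero
  | cons α s ih =>
    simp only [Multiset.map_cons, Multiset.prod_cons, Multiset.countP_cons, add_comm]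
    exact (isPeakRange_coeff_X_sub_C hρ α).coeff_mul hρ.le ih

theorem isPeakRange_coeff_of_splits (hρ : 0 < ρ) {p : k[X]} (hp : p.Splits) (hp0 : p ≠ 0) :
    IsPeakRange (fun n ↦ ‖p.coeff n‖ * ρ ^ n)
      (‖p.leadingCoeff‖ * (p.roots.map fun α ↦ max ρ ‖α‖).prod)
      (p.roots.countP (‖·‖ < ρ)) (p.roots.countP (‖·‖ ≤ ρ)) := by
  simpa [← hp.eq_prod_roots] using
    (isPeakRange_coeff_C (leadingCoeff_ne_zero.2 hp0)).coeff_mul hρ.le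
      (isPeakRange_coeff_prod_X_sub_C hρ p.roots)

theorem norm_eval_prod_X_sub_C (hρ : 0 < ρ) (s : Multiset k) {w : k} (hw : ‖w‖ = ρ) :
    ‖((s.map fun α ↦ X - C α).prod).eval w‖ =
      (s.map fun α ↦ max ρ ‖α‖).prod * ((s.filter (‖·‖ = ρ)).map fun α ↦ ‖w - α‖ / ρ).prod := by
  induction s using Multiset.induction_on with
  | empty => simp
  | cons α s ih =>
    have factor : ‖w - α‖ = max ρ ‖α‖ * (if ‖α‖ = ρ then ‖w - α‖ / ρ else 1) := by
      split_ifs with h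
      · rw [h, max_self, mul_div_cancel₀ _ hρ.ne']
      · have hdist : dist w 0 ≠ dist 0 α := by simpa [hw] using Ne.symm h
        rw [mul_one, ← dist_eq_norm, IsUltrametricDist.dist_eq_max_of_dist_ne_dist _ _ _ hdist,
          dist_zero_right, dist_zero_left, hw]
    have filter_cons : (((α ::ₘ s).filter (‖·‖ = ρ)).map fun α ↦ ‖w - α‖ / ρ).prod =
        (if ‖α‖ = ρ then ‖w - α‖ / ρ else 1) *
          ((s.filter (‖·‖ = ρ)).map fun α ↦ ‖w - α‖ / ρ).prod := by
      split_ifs with h <;> simp [h]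
    rw [filter_cons, Multiset.map_cons, Multiset.prod_cons, eval_mul, norm_mul, ih, eval_sub,
      eval_X, eval_C, Multiset.map_cons, Multiset.prod_cons, mul_mul_mul_comm, ← factor]

theorem IsPeakRange.card_roots_filter_norm_eq (hρ : 0 < ρ) {p : k[X]} (hp : p.Splits) (hp0 : p ≠ 0)
    {M : ℝ} {i j : ℕ} (h : IsPeakRange (fun n ↦ ‖p.coeff n‖ * ρ ^ n) M i j) :
    (p.roots.filter (‖·‖ = ρ)).card = j - i := by
  obtain ⟨-, rfl, rfl⟩ := h.unique (isPeakRange_coeff_of_splits hρ hp hp0)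
  exact Nat.eq_sub_of_add_eq' (countP_lt_add_card_filter_eq p.roots (‖·‖) ρ)

theorem IsPeakRange.norm_eval_eq (hρ : 0 < ρ) {p : k[X]} (hp : p.Splits) (hp0 : p ≠ 0)
    {M : ℝ} {i j : ℕ} (h : IsPeakRange (fun n ↦ ‖p.coeff n‖ * ρ ^ n) M i j)
    {w : k} (hw : ‖w‖ = ρ) :
    ‖p.eval w‖ = M * ((p.roots.filter (‖·‖ = ρ)).map fun α ↦ ‖w - α‖ / ρ).prod := by
  obtain ⟨rfl, -, -⟩ := h.unique (isPeakRange_coeff_of_splits hρ hp hp0)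
  conv_lhs => rw [hp.eq_prod_roots, eval_mul, eval_C, norm_mul,
    norm_eval_prod_X_sub_C hρ p.roots hw, ← mul_assoc]

theorem IsPeakRange.exists_root_pow_dist_le (hρ : 0 < ρ) {p : k[X]} (hp : p.Splits)
    {M : ℝ} {i j : ℕ} (h : IsPeakRange (fun n ↦ ‖p.coeff n‖ * ρ ^ n) M i j) (hij : i < j)
    {w : k} (hw : ‖w‖ = ρ) :
    ∃ α, ‖α‖ = ρ ∧ p.eval α = 0 ∧ M * (‖w - α‖ / ρ) ^ (j - i) ≤ ‖p.eval w‖ := by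
  have hM : 0 < M := h.pos fun n ↦ by positivity
  have hp0 : p ≠ 0 := by
    rintro rfl
    exact hM.ne (by simpa using h.apply_first)
  have hcard := h.card_roots_filter_norm_eq hρ hp hp0
  obtain ⟨α, hα, hle⟩ := exists_mem_pow_card_le_prod_map
    (s := p.roots.filter (‖·‖ = ρ)) (by rw [← Multiset.card_pos]; omega)
    (f := fun α ↦ ‖w - α‖ / ρ) (fun α ↦ by positivity)
  obtain ⟨hroot, hnorm⟩ := Multiset.mem_filter.1 hα
  refine ⟨α, hnorm, (mem_roots'.1 hroot).2, ?_⟩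
  rw [h.norm_eval_eq hρ hp hp0 hw, ← hcard]
  exact mul_le_mul_of_nonneg_left hle hM.le

end Split

theorem tendstoUniformlyOn_tsum_of_isUltrametricDist {ι X E : Type*} [NormedAddCommGroup E]
    [IsUltrametricDist E] [CompleteSpace E] {f : ι → X → E} {u : ι → ℝ} {S : Set X}
    (hu : Tendsto u cofinite (𝓝 0)) (hf : ∀ i, ∀ x ∈ S, ‖f i x‖ ≤ u i) :
    TendstoUniformlyOn (fun s : Finset ι ↦ fun x ↦ ∑ i ∈ s, f i x) (fun x ↦ ∑' i, f i x)
      atTop S := by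
  refine Metric.tendstoUniformlyOn_iff.2 fun ε hε ↦ ?_
  have hfin : {i | ε / 2 ≤ u i}.Finite := by
    simpa using eventually_cofinite.1 (hu.eventually (gt_mem_nhds (half_pos hε)))
  filter_upwards [eventually_ge_atTop hfin.toFinset] with s hs x hx
  have hsum : Summable fun i ↦ f i x :=
    NonarchimedeanAddGroup.summable_of_tendsto_cofinite_zero
      (squeeze_zero_norm (fun i ↦ hf i x hx) hu)
  rw [dist_eq_norm, ← hsum.sum_add_tsum_compl (s := s), add_sub_cancel_left]
  refine (IsUltrametricDist.norm_tsum_le_of_forall_le_of_nonneg (half_pos hε).le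
    fun i ↦ ?_).trans_lt (half_lt_self hε)
  refine (hf i x hx).trans (not_le.1 fun h ↦ i.2 (hs ?_)).le
  simpa using h

section Truncation

variable {k : Type*}

theorem exists_polynomial_eval_eq_pow_mul_sum_zpow [Field k] (a : ℤ → k) (s : Finset ℤ) :
    ∃ N : ℕ, ∃ p : k[X], (∀ n ∈ s, -(N : ℤ) ≤ n) ∧
      (∀ m : ℕ, p.coeff m = if (m : ℤ) - N ∈ s then a (m - N) else 0) ∧
      ∀ w ≠ 0, p.eval w = w ^ N * ∑ n ∈ s, a n * w ^ n := by
  obtain ⟨b, hb⟩ := s.bddBelow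
  have hN (n : ℤ) (hn : n ∈ s) : -(b.natAbs : ℤ) ≤ n := (by omega : _ ≤ b).trans (hb hn)
  refine ⟨b.natAbs, ∑ n ∈ s, monomial (n + b.natAbs).toNat (a n), hN, fun m ↦ ?_, fun w hw ↦ ?_⟩
  · rw [finsetSum_coeff, ← Finset.sum_ite_eq' s ((m : ℤ) - b.natAbs) a]
    refine Finset.sum_congr rfl fun n hn ↦ ?_
    have := hN n hn
    rw [coeff_monomial]
    exact if_congr (by omega) rfl rfl
  · rw [eval_finsetSum, Finset.mul_sum]
    refine Finset.sum_congr rfl fun n hn ↦ ?_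
    have := hN n hn
    rw [eval_monomial, ← zpow_natCast, Int.toNat_of_nonneg (by omega), zpow_add₀ hw, zpow_natCast]
    ring

theorem IsPeakRange.exists_root_truncation_pow_dist_le [NormedField k] [IsAlgClosed k]
    [IsUltrametricDist k] {a : ℤ → k} {ρ M : ℝ} (hρ : 0 < ρ) {i j : ℤ}
    (h : IsPeakRange (fun n ↦ ‖a n‖ * ρ ^ n) M i j) (hij : i < j) {s : Finset ℤ}
    (hi : i ∈ s) (hj : j ∈ s) {w : k} (hw : ‖w‖ = ρ) :
    ∃ v, ‖v‖ = ρ ∧ ∑ n ∈ s, a n * v ^ n = 0 ∧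
      M * (‖w - v‖ / ρ) ^ (j - i).toNat ≤ ‖∑ n ∈ s, a n * w ^ n‖ := by
  have ne_zero {v : k} (hv : ‖v‖ = ρ) : v ≠ 0 := norm_pos_iff.1 (hv ▸ hρ)
  obtain ⟨N, p, hN, hcoeff, heval⟩ := exists_polynomial_eval_eq_pow_mul_sum_zpow a s
  have hNi := hN i hi
  have hM : 0 < M := h.pos fun n ↦ by positivity
  have hρN : 0 < ρ ^ N := pow_pos hρ N
  have norm_coeff (m : ℕ) : ‖p.coeff m‖ * ρ ^ m =
      (if (m : ℤ) - N ∈ s then ‖a (m - N)‖ * ρ ^ (m - N : ℤ) else 0) * ρ ^ N := by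
    rw [hcoeff, zpow_sub₀ hρ.ne', zpow_natCast, zpow_natCast]
    split_ifs
    · field_simp
    · simp
  have hp : IsPeakRange (fun m ↦ ‖p.coeff m‖ * ρ ^ m) (M * ρ ^ N) (i + N).toNat (j + N).toNat := by
    simpa only [norm_coeff] using
      ((h.ite_mem hM hi hj).comp_natCast_sub hNi (hN j hj)).mul_const hρN
  obtain ⟨v, hv, hroot, hle⟩ :=
    hp.exists_root_pow_dist_le hρ (IsAlgClosed.splits p) (by omega) hw
  rw [heval v (ne_zero hv)] at hroot
  rw [heval w (ne_zero hw), norm_mul, norm_pow, hw, mul_right_comm, mul_comm (ρ ^ N),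
    show (j + N).toNat - (i + N).toNat = (j - i).toNat by omega] at hle
  exact ⟨v, hv, (mul_eq_zero.1 hroot).resolve_left (pow_ne_zero N (ne_zero hv)),
    le_of_mul_le_mul_right hle hρN⟩

end Truncation

theorem exists_zero_of_forall_exists_pow_dist_le {X E : Type*} [PseudoMetricSpace X]
    [NormedAddCommGroup E] {S : Set X} (hS : IsComplete S) (hne : S.Nonempty) {f : X → E}
    (hf : ContinuousOn f S) {C : ℝ} (hC : 0 < C) {d : ℕ} (hd : d ≠ 0)
    (h : ∀ x ∈ S, ∀ η > 0, ∃ y ∈ S, ‖f y‖ ≤ η ∧ C * dist x y ^ d ≤ max ‖f x‖ η) :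
    ∃ x ∈ S, f x = 0 := by
  let η (m : ℕ) : ℝ := C * ((1 / 2) ^ m) ^ d
  have hη (m : ℕ) : 0 < η m := by positivity
  have hη_anti : Antitone η := fun m n hmn ↦ by
    refine mul_le_mul_of_nonneg_left (pow_le_pow_left₀ (by positivity) ?_ d) hC.le
    exact pow_le_pow_of_le_one (by norm_num) (by norm_num) hmn
  have hη_lim : Tendsto η atTop (𝓝 0) := by
    have := (tendsto_pow_atTop_nhds_zero_of_lt_one (r := (1 / 2 : ℝ)) (by norm_num)
      (by norm_num)).pow d |>.const_mul C
    simpa [η, hd] using this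
  choose! step step_mem step_small step_dist using h
  obtain ⟨x₀, hx₀⟩ := hne
  let x : ℕ → X := fun m ↦ Nat.rec (step x₀ (η 0)) (fun m y ↦ step y (η (m + 1))) m
  have x_mem (m : ℕ) : x m ∈ S := by
    induction m with
    | zero => exact step_mem x₀ hx₀ _ (hη 0)
    | succ m ih => exact step_mem (x m) ih _ (hη (m + 1))
  have x_small (m : ℕ) : ‖f (x m)‖ ≤ η m := by
    cases m with
    | zero => exact step_small x₀ hx₀ _ (hη 0)
    | succ m => exact step_small (x m) (x_mem m) _ (hη (m + 1))
  have x_dist (m : ℕ) : dist (x m) (x (m + 1)) ≤ 1 * (1 / 2) ^ m := by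
    have hle := (step_dist (x m) (x_mem m) _ (hη (m + 1))).trans
      (max_le (x_small m) (hη_anti m.le_succ))
    rw [one_mul]
    exact le_of_pow_le_pow_left₀ hd (by positivity) (le_of_mul_le_mul_left hle hC)
  obtain ⟨z, hz, hlim⟩ := cauchySeq_tendsto_of_isComplete hS x_mem
    (cauchySeq_of_le_geometric (1 / 2) 1 (by norm_num) x_dist)
  refine ⟨z, hz, tendsto_nhds_unique ((hf z hz).tendsto.comp
    (tendsto_nhdsWithin_iff.2 ⟨hlim, Eventually.of_forall x_mem⟩)) ?_⟩
  exact squeeze_zero_norm x_small hη_lim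

section LaurentSum

variable {k : Type*} [NormedField k] [IsUltrametricDist k] [CompleteSpace k]
  {a : ℤ → k} {ρ : ℝ}

theorem tendstoUniformlyOn_laurent (ha : Tendsto (fun n ↦ ‖a n‖ * ρ ^ n) cofinite (𝓝 0)) :
    TendstoUniformlyOn (fun s : Finset ℤ ↦ fun w ↦ ∑ n ∈ s, a n * w ^ n)
      (fun w ↦ ∑' n, a n * w ^ n) atTop (Metric.sphere 0 ρ) :=
  tendstoUniformlyOn_tsum_of_isUltrametricDist ha fun n w hw ↦ by
    rw [norm_mul, norm_zpow, mem_sphere_zero_iff_norm.1 hw]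

theorem continuousOn_laurent (hρ : 0 < ρ)
    (ha : Tendsto (fun n ↦ ‖a n‖ * ρ ^ n) cofinite (𝓝 0)) :
    ContinuousOn (fun w ↦ ∑' n, a n * w ^ n) (Metric.sphere 0 ρ) :=
  (tendstoUniformlyOn_laurent ha).continuousOn <| .of_forall fun s ↦
    continuousOn_finsetSum s fun n _ ↦ continuousOn_const.mul <|
      continuousOn_id.zpow₀ n fun _ hw ↦ .inl (ne_zero_of_mem_sphere hρ.ne' ⟨_, hw⟩)

variable [IsAlgClosed k] {M : ℝ} {i j : ℤ}

theorem IsPeakRange.exists_norm_laurent_le_pow_dist_le (hρ : 0 < ρ)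
    (ha : Tendsto (fun n ↦ ‖a n‖ * ρ ^ n) cofinite (𝓝 0))
    (h : IsPeakRange (fun n ↦ ‖a n‖ * ρ ^ n) M i j) (hij : i < j) {w : k} (hw : ‖w‖ = ρ)
    {η : ℝ} (hη : 0 < η) :
    ∃ v, ‖v‖ = ρ ∧ ‖∑' n, a n * v ^ n‖ ≤ η ∧
      M * (‖w - v‖ / ρ) ^ (j - i).toNat ≤ max ‖∑' n, a n * w ^ n‖ η := by
  obtain ⟨s, hs, hi, hj⟩ :=
    ((Metric.tendstoUniformlyOn_iff.1 (tendstoUniformlyOn_laurent ha) η hη).and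
      ((eventually_ge_atTop {i}).and (eventually_ge_atTop {j}))).exists
  obtain ⟨v, hv, hroot, hle⟩ := h.exists_root_truncation_pow_dist_le hρ hij
    (Finset.singleton_subset_iff.1 hi) (Finset.singleton_subset_iff.1 hj) hw
  refine ⟨v, hv, ?_, hle.trans ?_⟩
  · simpa [hroot] using (hs v (by simpa using hv)).le
  · calc ‖∑ n ∈ s, a n * w ^ n‖
        = ‖∑' n, a n * w ^ n + (∑ n ∈ s, a n * w ^ n - ∑' n, a n * w ^ n)‖ := by
          rw [add_sub_cancel]
      _ ≤ max ‖∑' n, a n * w ^ n‖ ‖∑ n ∈ s, a n * w ^ n - ∑' n, a n * w ^ n‖ :=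
          IsUltrametricDist.norm_add_le_max _ _
      _ ≤ max ‖∑' n, a n * w ^ n‖ η := by
          gcongr
          exact (dist_eq_norm' _ _).symm.trans_le (hs w (by simpa using hw)).le

end LaurentSum

theorem exists_norm_eq_of_norm_mul_zpow_eq {k : Type*} [NormedField k] [IsAlgClosed k] {x y : k}
    {ρ : ℝ} (hρ : 0 < ρ) (hy : y ≠ 0) {m n : ℤ} (hmn : m < n)
    (h : ‖x‖ * ρ ^ m = ‖y‖ * ρ ^ n) : ∃ w : k, ‖w‖ = ρ := by
  obtain ⟨d, rfl⟩ := Int.exists_add_of_le hmn.le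
  have hd : 0 < d := by omega
  obtain ⟨w, hw⟩ := IsAlgClosed.exists_pow_nat_eq (x / y) hd
  refine ⟨w, (pow_left_inj₀ (norm_nonneg w) hρ.le hd.ne').1 ?_⟩
  rw [zpow_add₀ hρ.ne', zpow_natCast, mul_left_comm, mul_comm] at h
  rw [← norm_pow, hw, norm_div, div_eq_iff (norm_ne_zero_iff.2 hy), mul_comm]
  exact mul_left_cancel₀ (zpow_pos hρ m).ne' (h.trans (by ring))

theorem IsPeakRange.exists_norm_eq_laurent_eq_zero {k : Type*} [NormedField k]
    [IsUltrametricDist k] [CompleteSpace k] [IsAlgClosed k] {a : ℤ → k} {ρ M : ℝ} {i j : ℤ}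
    (hρ : 0 < ρ)
    (ha : Tendsto (fun n ↦ ‖a n‖ * ρ ^ n) cofinite (𝓝 0))
    (h : IsPeakRange (fun n ↦ ‖a n‖ * ρ ^ n) M i j) (hij : i < j) :
    ∃ z, ‖z‖ = ρ ∧ ∑' n, a n * z ^ n = 0 := by
  have hM : 0 < M := h.pos fun n ↦ by positivity
  obtain ⟨w, hw⟩ : ∃ w : k, ‖w‖ = ρ :=
    exists_norm_eq_of_norm_mul_zpow_eq hρ
      (fun haj ↦ hM.ne (by simpa [haj] using h.apply_last)) hij
      (h.apply_first.trans h.apply_last.symm)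
  obtain ⟨z, hz, hfz⟩ := exists_zero_of_forall_exists_pow_dist_le
    (S := Metric.sphere 0 ρ) Metric.isClosed_sphere.isComplete ⟨w, by simpa using hw⟩
    (continuousOn_laurent hρ ha) (C := M / ρ ^ (j - i).toNat) (by positivity)
    (d := (j - i).toNat) (by omega) fun x hx η hη ↦ by
      obtain ⟨v, hv, hsmall, hdist⟩ :=
        h.exists_norm_laurent_le_pow_dist_le hρ ha hij (mem_sphere_zero_iff_norm.1 hx) hη
      rw [div_pow, mul_div_left_comm, mul_comm, ← dist_eq_norm] at hdist
      exact ⟨v, mem_sphere_zero_iff_norm.2 hv, hsmall, hdist⟩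
  exact ⟨z, mem_sphere_zero_iff_norm.1 hz, hfz⟩

section CriticalRadius

/-- The radius `ρ` at which the terms of indices `m` and `n` of a series with coefficients of sizes
`c` are equally large, `c n * ρ ^ n = c m * ρ ^ m`. The formula is meant for `n < m` and `0 < c m`;
the radius is `0` when `c n = 0`. -/
noncomputable def crossingRadius (c : ℤ → ℝ) (m n : ℤ) : ℝ :=
  (c n / c m) ^ ((m - n : ℝ)⁻¹)

variable {c : ℤ → ℝ} {m n : ℤ} {t : ℝ}

theorem rpow_intCast_sub_mul_zpow (ht : 0 < t) (m n : ℤ) :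
    t ^ (m - n : ℝ) * t ^ n = t ^ m := by
  rw [← Int.cast_sub, Real.rpow_intCast, ← zpow_add₀ ht.ne', sub_add_cancel]

theorem crossingRadius_le_iff (hc : ∀ n, 0 ≤ c n) (hm : 0 < c m) (hnm : n < m) (ht : 0 < t) :
    crossingRadius c m n ≤ t ↔ c n * t ^ n ≤ c m * t ^ m := by
  have hnm' : (0 : ℝ) < m - n := sub_pos.2 (Int.cast_lt.2 hnm)
  rw [crossingRadius, Real.rpow_inv_le_iff_of_pos (div_nonneg (hc n) hm.le) ht.le hnm',
    div_le_iff₀' hm, ← rpow_intCast_sub_mul_zpow ht m n, ← mul_assoc,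
    mul_le_mul_iff_left₀ (zpow_pos ht n)]

theorem le_crossingRadius_iff (hc : ∀ n, 0 ≤ c n) (hm : 0 < c m) (hnm : n < m) (ht : 0 < t) :
    t ≤ crossingRadius c m n ↔ c m * t ^ m ≤ c n * t ^ n := by
  have hnm' : (0 : ℝ) < m - n := sub_pos.2 (Int.cast_lt.2 hnm)
  rw [crossingRadius, Real.le_rpow_inv_iff_of_pos ht.le (div_nonneg (hc n) hm.le) hnm',
    le_div_iff₀' hm, ← rpow_intCast_sub_mul_zpow ht m n, ← mul_assoc,
    mul_le_mul_iff_left₀ (zpow_pos ht n)]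

theorem mul_crossingRadius_zpow_eq (hc : ∀ n, 0 ≤ c n) (hm : 0 < c m) (hnm : n < m)
    (hpos : 0 < crossingRadius c m n) :
    c n * crossingRadius c m n ^ n = c m * crossingRadius c m n ^ m :=
  ((crossingRadius_le_iff hc hm hnm hpos).1 le_rfl).antisymm
    ((le_crossingRadius_iff hc hm hnm hpos).1 le_rfl)

theorem crossingRadius_pos (hm : 0 < c m) (hn : 0 < c n) : 0 < crossingRadius c m n :=
  Real.rpow_pos_of_pos (div_pos hn hm) _

theorem mul_zpow_le_mul_zpow_of_le {x y s t : ℝ} (hy : 0 ≤ y) (hs : 0 < s) (hst : s ≤ t)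
    (hmn : m ≤ n) (h : x * t ^ n ≤ y * t ^ m) : x * s ^ n ≤ y * s ^ m := by
  have ht := hs.trans_le hst
  have scale (l : ℤ) : s ^ l = t ^ l * (s / t) ^ l := by
    rw [← mul_zpow, mul_div_cancel₀ _ ht.ne']
  rw [scale, scale, ← mul_assoc, ← mul_assoc]
  exact mul_le_mul h (zpow_le_zpow_right_of_le_one₀ (by positivity) ((div_le_one ht).2 hst) hmn)
    (by positivity) (by positivity)

theorem exists_forall_crossingRadius_le (hc : ∀ n, 0 ≤ c n) (hm : 0 < c m) (hnm : n < m)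
    (hn : 0 < c n)
    (h : Tendsto (fun l ↦ c l * crossingRadius c m n ^ l) cofinite (𝓝 0)) :
    ∃ l < m, 0 < crossingRadius c m l ∧ ∀ p < m, crossingRadius c m p ≤ crossingRadius c m l := by
  have hpos := crossingRadius_pos hm hn
  have hfin : {l | l < m ∧ crossingRadius c m n ≤ crossingRadius c m l}.Finite := by
    have htail := eventually_cofinite.1 <|
      h.eventually (gt_mem_nhds (mul_pos hm (zpow_pos hpos m)))
    exact htail.subset fun l ⟨hlm, hl⟩ ↦ not_lt.2 ((le_crossingRadius_iff hc hm hlm hpos).1 hl)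
  obtain ⟨l, ⟨hlm, hl⟩, hmax⟩ := Set.exists_max_image _ (crossingRadius c m) hfin ⟨n, hnm, le_rfl⟩
  exact ⟨l, hlm, hpos.trans_le hl, fun p hp ↦ (le_total (crossingRadius c m n) _).elim
    (fun hnp ↦ hmax p ⟨hp, hnp⟩) fun hpn ↦ hpn.trans hl⟩

theorem exists_lt_isPeakRange (hc : ∀ n, 0 ≤ c n) {ε : ℝ} (hε : 0 < ε)
    (h : ∀ t, 0 < t → t ≤ ε → Tendsto (fun n ↦ c n * t ^ n) cofinite (𝓝 0))
    (hinf : {n : ℤ | n < 0 ∧ c n ≠ 0}.Infinite) :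
    ∃ ρ M i j, 0 < ρ ∧ ρ < ε ∧ i < j ∧ IsPeakRange (fun n ↦ c n * ρ ^ n) M i j := by
  have pos_of_ne {n : ℤ} (hn : c n ≠ 0) : 0 < c n := (hc n).lt_of_ne' hn
  obtain ⟨n₀, -, hn₀⟩ := hinf.nonempty
  obtain ⟨Mε, m, _, hpeak⟩ := exists_isPeakRange_of_tendsto_cofinite_zero (h ε hε le_rfl)
    (mul_pos (pos_of_ne hn₀) (zpow_pos hε n₀))
  have hMε : 0 < Mε := hpeak.pos fun n ↦ mul_nonneg (hc n) (zpow_nonneg hε.le n)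
  have hm : 0 < c m :=
    pos_of_mul_pos_left (hMε.trans_eq hpeak.apply_first.symm) (zpow_pos hε m).le
  have crossing_lt {n : ℤ} (hnm : n < m) : crossingRadius c m n < ε := by
    rw [← not_le, le_crossingRadius_iff hc hm hnm hε, not_le]
    exact (hpeak.lt_of_lt_first n hnm).trans_eq hpeak.apply_first.symm
  obtain ⟨n₁, ⟨-, hcn₁⟩, hn₁⟩ : ∃ n ∈ {n : ℤ | n < 0 ∧ c n ≠ 0}, n < m := by
    by_contra! hge
    exact hinf ((Set.finite_Ico m 0).subset fun n hn ↦ ⟨hge n hn, hn.1⟩)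
  obtain ⟨n, hnm, hρ, hmax⟩ := exists_forall_crossingRadius_le hc hm hn₁ (pos_of_ne hcn₁)
    (h _ (crossingRadius_pos hm (pos_of_ne hcn₁)) (crossing_lt hn₁).le)
  set ρ := crossingRadius c m n
  have eq_at_n : c n * ρ ^ n = c m * ρ ^ m := mul_crossingRadius_zpow_eq hc hm hnm hρ
  have le_at_m (l : ℤ) : c l * ρ ^ l ≤ c m * ρ ^ m := by
    rcases lt_or_ge l m with hl | hl
    · exact (crossingRadius_le_iff hc hm hl hρ).1 (hmax l hl)
    · exact mul_zpow_le_mul_zpow_of_le hm.le hρ (crossing_lt hnm).le hl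
        ((hpeak.le_max l).trans_eq hpeak.apply_first.symm)
  obtain ⟨M, i, j, hij, hpeakρ⟩ := exists_lt_isPeakRange_of_apply_eq
    (h ρ hρ (crossing_lt hnm).le) (mul_pos hm (zpow_pos hρ m)) hnm eq_at_n le_at_m
  exact ⟨ρ, M, i, j, hρ, crossing_lt hnm, hij, hpeakρ⟩

end CriticalRadius

theorem tendsto_mul_zpow_cofinite_of_tendsto {c : ℤ → ℝ} (hc : ∀ n, 0 ≤ c n) {r t : ℝ}
    (ht : 0 < t) (htr : t ≤ r)
    (hpos : Tendsto (fun n : ℕ ↦ c n * r ^ n) atTop (𝓝 0))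
    (hneg : Tendsto (fun n : ℕ ↦ c (-n) * t ^ (-n : ℤ)) atTop (𝓝 0)) :
    Tendsto (fun n : ℤ ↦ c n * t ^ n) cofinite (𝓝 0) := by
  rw [Int.cofinite_eq, tendsto_sup]
  constructor
  · rw [← Filter.map_neg_atTop, tendsto_map'_iff, ← Nat.map_cast_int_atTop, tendsto_map'_iff]
    exact hneg
  · rw [← Nat.map_cast_int_atTop, tendsto_map'_iff]
    refine squeeze_zero (fun n ↦ mul_nonneg (hc n) (zpow_nonneg ht.le _)) (fun n ↦ ?_) hpos
    rw [Function.comp_apply, zpow_natCast]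
    exact mul_le_mul_of_nonneg_left (pow_le_pow_left₀ ht.le htr n) (hc n)

theorem infinite_of_forall_exists_apply_lt {X : Type*} {S : Set X} {f : X → ℝ}
    (hne : S.Nonempty) (h : ∀ x ∈ S, ∃ y ∈ S, f y < f x) : S.Infinite := by
  intro hfin
  obtain ⟨x, hx, hmin⟩ := Set.exists_min_image S f hfin hne
  obtain ⟨y, hy, hlt⟩ := h x hx
  exact (hmin y hy).not_gt hlt

theorem exists_norm_lt_laurent_eq_zero {k : Type*} [NormedField k] [IsUltrametricDist k]
    [CompleteSpace k] [IsAlgClosed k] {a : ℤ → k} {ε : ℝ} (hε : 0 < ε)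
    (ha : ∀ t, 0 < t → t ≤ ε → Tendsto (fun n ↦ ‖a n‖ * t ^ n) cofinite (𝓝 0))
    (hinf : {n : ℤ | n < 0 ∧ a n ≠ 0}.Infinite) :
    ∃ z, z ≠ 0 ∧ ‖z‖ < ε ∧ ∑' n, a n * z ^ n = 0 := by
  obtain ⟨ρ, M, i, j, hρ, hρε, hij, h⟩ := exists_lt_isPeakRange
    (c := fun n ↦ ‖a n‖) (fun n ↦ norm_nonneg (a n)) hε ha (by simpa only [norm_ne_zero_iff])
  obtain ⟨z, hz, hfz⟩ := h.exists_norm_eq_laurent_eq_zero hρ (ha ρ hρ hρε.le) hij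
  exact ⟨z, norm_pos_iff.1 (hz ▸ hρ), hz ▸ hρε, hfz⟩

theorem essential_singularity_infinitely_many_zeros_general {k : Type*} [NormedField k]
    [IsAlgClosed k] [CompleteSpace k] [IsUltrametricDist k] {a : ℤ → k} {r : ℝ} (hr : 0 < r)
    (hpos : Tendsto (fun n : ℕ ↦ ‖a n‖ * r ^ n) atTop (𝓝 0))
    (hneg : ∀ t : ℝ, 0 < t → Tendsto (fun n : ℕ ↦ ‖a (-n)‖ * t ^ (-n : ℤ)) atTop (𝓝 0))
    (hinf : {n : ℤ | n < 0 ∧ a n ≠ 0}.Infinite) :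
    {z : k | z ≠ 0 ∧ ‖z‖ ≤ r ∧ ∑' n : ℤ, a n * z ^ n = 0}.Infinite := by
  have zero_below (ε : ℝ) (hε : 0 < ε) (hεr : ε ≤ r) :
      ∃ z, z ≠ 0 ∧ ‖z‖ < ε ∧ ∑' n, a n * z ^ n = 0 :=
    exists_norm_lt_laurent_eq_zero hε (fun t ht htε ↦
      tendsto_mul_zpow_cofinite_of_tendsto (fun n ↦ norm_nonneg (a n)) ht (htε.trans hεr) hpos
        (hneg t ht)) hinf
  refine infinite_of_forall_exists_apply_lt (f := norm) ?_ fun w ⟨hw0, hwr, _⟩ ↦ ?_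
  · obtain ⟨z, hz0, hzr, hz⟩ := zero_below r hr le_rfl
    exact ⟨z, hz0, hzr.le, hz⟩
  · obtain ⟨z, hz0, hzw, hz⟩ := zero_below ‖w‖ (norm_pos_iff.2 hw0) hwr
    exact ⟨z, ⟨hz0, hzw.le.trans hwr, hz⟩, hzw⟩

/-- A Laurent series, analytic on the punctured disc `0 < |z| ≤ r`, with infinitely
many nonzero coefficients of negative index, has infinitely many zeros in the
punctured disc. -/
theorem essential_singularity_infinitely_many_zeros
    (k : Type*) [NontriviallyNormedField k] [IsAlgClosed k] [CompleteSpace k]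
    [IsUltrametricDist k]
    (a : ℤ → k) (c : k) (hc : c ≠ 0) (r : ℝ) (hr : r = ‖c‖)
    (hpos : Tendsto (fun n : ℕ => ‖a (n : ℤ)‖ * r ^ (n : ℕ)) atTop (nhds 0))
    (hneg : ∀ t : ℝ, 0 < t →
      Tendsto (fun n : ℕ => ‖a (-(n : ℤ))‖ * t ^ (-(n : ℤ))) atTop (nhds 0))
    (hinf : {n : ℤ | n < 0 ∧ a n ≠ 0}.Infinite) :
    {z : k | z ≠ 0 ∧ ‖z‖ ≤ r ∧ ∑' n : ℤ, a n * z ^ n = 0}.Infinite := by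
  subst hr
  exact essential_singularity_infinitely_many_zeros_general (norm_pos_iff.2 hc) hpos hneg hinf
end

section
/- Let k be an algebraically closed complete non-Archimedean valued field, r ∈ |k*|, and let f be a non-constant power series convergent on the closed disc D(r) = {z ∈ k : |z| ≤ r}. Then f : D(r) → k is an open map onto its image in the following sense: for every z₀ ∈ D(r) there exists δ > 0 such that the closed disc {w : |w − f(z₀)| ≤ δ} is contained in f(D(r)). -/
open Filter

/-!
Let `d ≥ 1` be the last index at which `‖aₙ‖ rⁿ`, `n ≥ 1`, is maximal. Then `f = ∑ aₙ zⁿ` maps the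
disc `‖z‖ ≤ r` onto the disc of radius `‖a_d‖ r ^ d` around `a₀`. As any point of a disc is a centre
of it, the latter is also the disc of that radius around `f z₀`.

For surjectivity, the truncations `P_N` of `f` with `N > d` satisfy a quantitative open mapping
principle: comparing the Taylor coefficients of `P_N` at `z` with its roots shows that every `w` has
a preimage `ρ` under `P_N` with `‖ρ - z‖ ^ d * ‖a_d‖ ≤ ‖P_N z - w‖`. With `z = 0` this solves the
first equation `P_N z = w`; a solution of `P_N z = w` is then moved to a solution of
`P_{N+1} z = w` by a step whose `d`-th power is `O(‖a_N‖ r ^ N)`, and these solutions converge to a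
solution of `f z = w`.
-/

open Polynomial Topology Metric

section Polynomial

variable {k : Type*} [NormedField k] [IsUltrametricDist k]

theorem norm_coeff_prod_X_sub_C_mul_pow_le {η : ℝ} (hη : 0 ≤ η) {s : Multiset k}
    (hs : ∀ ρ ∈ s, η ≤ ‖ρ‖) (j : ℕ) :
    ‖(s.map fun ρ ↦ X - C ρ).prod.coeff j‖ * η ^ j ≤ ‖(s.map fun ρ ↦ X - C ρ).prod.coeff 0‖ := by
  induction s using Multiset.induction_on generalizing j with
  | empty => cases j <;> simp [coeff_one]
  | cons ρ s ih =>
    have ih := ih fun ρ' hρ' ↦ hs ρ' (Multiset.mem_cons_of_mem hρ')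
    have hρ : η ≤ ‖ρ‖ := hs ρ (Multiset.mem_cons_self ρ s)
    simp only [Multiset.map_cons, Multiset.prod_cons]
    set P := (s.map fun ρ ↦ X - C ρ).prod
    have hzero : ‖((X - C ρ) * P).coeff 0‖ = ‖ρ‖ * ‖P.coeff 0‖ := by simp [mul_coeff_zero]
    cases j with
    | zero => simp
    | succ j =>
      have hsucc : ((X - C ρ) * P).coeff (j + 1) = P.coeff j + -(ρ * P.coeff (j + 1)) := by
        simp [sub_mul, ← sub_eq_add_neg]
      have hleft : ‖P.coeff j‖ * η ^ (j + 1) ≤ ‖ρ‖ * ‖P.coeff 0‖ := calc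
        ‖P.coeff j‖ * η ^ (j + 1) = η * (‖P.coeff j‖ * η ^ j) := by ring
        _ ≤ ‖ρ‖ * ‖P.coeff 0‖ := by gcongr; exact ih j
      have hright : ‖-(ρ * P.coeff (j + 1))‖ * η ^ (j + 1) ≤ ‖ρ‖ * ‖P.coeff 0‖ := by
        rw [norm_neg, norm_mul, mul_assoc]
        gcongr
        exact ih (j + 1)
      rw [hzero, hsucc]
      calc ‖P.coeff j + -(ρ * P.coeff (j + 1))‖ * η ^ (j + 1)
          ≤ max ‖P.coeff j‖ ‖-(ρ * P.coeff (j + 1))‖ * η ^ (j + 1) := by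
            gcongr
            exact IsUltrametricDist.norm_add_le_max _ _
        _ ≤ ‖ρ‖ * ‖P.coeff 0‖ := by
            rw [max_mul_of_nonneg _ _ (by positivity)]
            exact max_le hleft hright

theorem norm_coeff_mul_pow_le_norm_coeff_zero {P : k[X]} (hP : P.Splits) {η : ℝ} (hη : 0 ≤ η)
    (hroots : ∀ ρ ∈ P.roots, η ≤ ‖ρ‖) (j : ℕ) : ‖P.coeff j‖ * η ^ j ≤ ‖P.coeff 0‖ := by
  rw [hP.eq_prod_roots, coeff_C_mul, coeff_C_mul, norm_mul, norm_mul, mul_assoc]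
  gcongr
  exact norm_coeff_prod_X_sub_C_mul_pow_le hη hroots j

theorem exists_isRoot_norm_pow_mul_norm_coeff_le {P : k[X]} (hP : P.Splits) {j : ℕ} (hj : j ≠ 0)
    (hcoeff : P.coeff j ≠ 0) : ∃ ρ, P.IsRoot ρ ∧ ‖ρ‖ ^ j * ‖P.coeff j‖ ≤ ‖P.coeff 0‖ := by
  classical
  have hdeg : P.natDegree ≠ 0 := by
    have := le_natDegree_of_ne_zero hcoeff
    omega
  obtain ⟨ρ, hρ, hmin⟩ := P.roots.toFinset.exists_min_image norm
    (Multiset.toFinset_nonempty.2 (hP.roots_ne_zero hdeg))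
  simp only [Multiset.mem_toFinset] at hρ hmin
  refine ⟨ρ, isRoot_of_mem_roots hρ, ?_⟩
  rw [mul_comm]
  exact norm_coeff_mul_pow_le_norm_coeff_zero hP (norm_nonneg ρ) hmin j

theorem norm_eval_hasseDeriv_eq {P : k[X]} {r : ℝ} (hr : 0 < r) {d : ℕ}
    (hP : ∀ n, d < n → ‖P.coeff n‖ * r ^ n < ‖P.coeff d‖ * r ^ d) {z : k} (hz : ‖z‖ ≤ r) :
    ‖(hasseDeriv d P).eval z‖ = ‖P.coeff d‖ := by
  have hlead : (hasseDeriv d P).coeff 0 * z ^ 0 = P.coeff d := by simp [hasseDeriv_coeff]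
  rw [eval_eq_sum_range, ← hlead]
  refine IsNonarchimedean.apply_sum_eq_of_lt IsUltrametricDist.isNonarchimedean_norm
    (by simp) (by simp) fun n _ hn ↦ ?_
  rw [hlead, hasseDeriv_coeff, norm_mul, norm_mul, norm_pow]
  have hlt : ‖P.coeff (n + d)‖ * r ^ n < ‖P.coeff d‖ := by
    have := hP (n + d) (by omega)
    rw [pow_add, ← mul_assoc] at this
    exact lt_of_mul_lt_mul_right this (by positivity)
  calc ‖((n + d).choose d : k)‖ * ‖P.coeff (n + d)‖ * ‖z‖ ^ n
      ≤ 1 * ‖P.coeff (n + d)‖ * r ^ n := by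
        gcongr
        exact IsUltrametricDist.norm_natCast_le_one k _
    _ < ‖P.coeff d‖ := by rwa [one_mul]

theorem exists_eval_eq_and_norm_sub_pow_mul_le [IsAlgClosed k] (P : k[X]) {d : ℕ} (hd : d ≠ 0)
    {z : k} (hz : (hasseDeriv d P).eval z ≠ 0) (w : k) :
    ∃ ρ, P.eval ρ = w ∧ ‖ρ - z‖ ^ d * ‖(hasseDeriv d P).eval z‖ ≤ ‖P.eval z - w‖ := by
  set Q := taylor z P - C w
  have hcoeff : Q.coeff d = (hasseDeriv d P).eval z := by
    simp [Q, taylor_coeff, coeff_C_of_ne_zero hd]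
  have hzero : Q.coeff 0 = P.eval z - w := by simp [Q, taylor_coeff_zero]
  obtain ⟨y, hy, hle⟩ :=
    exists_isRoot_norm_pow_mul_norm_coeff_le (IsAlgClosed.splits Q) hd (hcoeff ▸ hz)
  refine ⟨y + z, ?_, ?_⟩
  · simpa [Q, taylor_eval, sub_eq_zero] using hy
  · rwa [add_sub_cancel_right, ← hcoeff, ← hzero]

end Polynomial

theorem exists_last_max_of_tendsto {α : Type*} [LinearOrder α] [TopologicalSpace α]
    [OrderTopology α] {u : ℕ → α} {x : α} (hu : Tendsto u atTop (𝓝 x)) {m : ℕ} (hm : x < u m) :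
    ∃ d, (∀ n, u n ≤ u d) ∧ ∀ n, d < n → u n < u d := by
  have hfin : {n | u m ≤ u n}.Finite := by
    have := hu.eventually_lt_const hm
    rw [← Nat.cofinite_eq_atTop, eventually_cofinite] at this
    simpa only [not_lt] using this
  obtain ⟨d, hd, hmax⟩ :=
    Set.exists_max_image _ (fun n ↦ toLex (u n, n)) hfin ⟨m, le_refl (u m)⟩
  simp only [Set.mem_ofPred_eq, Prod.Lex.toLex_le_toLex] at hd hmax
  refine ⟨d, fun n ↦ ?_, fun n hn ↦ ?_⟩ <;> rcases lt_or_ge (u n) (u m) with h | h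
  · exact (h.trans_le hd).le
  · exact (hmax n h).elim le_of_lt fun h ↦ h.1.le
  · exact h.trans_le hd
  · exact (hmax n h).resolve_right fun h ↦ hn.not_ge h.2

theorem tendsto_zero_of_tendsto_pow_zero {ι : Type*} {l : Filter ι} {u : ι → ℝ}
    (hu : ∀ i, 0 ≤ u i) {d : ℕ} (hd : d ≠ 0) (h : Tendsto (fun i ↦ u i ^ d) l (𝓝 0)) :
    Tendsto u l (𝓝 0) := by
  have := h.rpow_const (p := (d : ℝ)⁻¹) (Or.inr (by positivity))
  simpa only [Real.pow_rpow_inv_natCast (hu _) hd,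
    Real.zero_rpow (inv_ne_zero (Nat.cast_ne_zero.2 hd))] using this

section PowerSeries

variable {k : Type*} [NormedField k]

/-- `d` is the last index at which `‖aₙ‖ rⁿ`, `n ≥ 1`, is maximal. For `r > 0` this is the
Weierstrass degree, on the closed disc of radius `r`, of the power series `∑ aₙ zⁿ` without its
constant term; the latter is left out so that the notion does not change when a constant is
subtracted from the series. -/
structure IsDominantIndex (a : ℕ → k) (r : ℝ) (d : ℕ) : Prop where
  ne_zero : d ≠ 0
  le : ∀ n, n ≠ 0 → ‖a n‖ * r ^ n ≤ ‖a d‖ * r ^ d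
  lt : ∀ n, d < n → ‖a n‖ * r ^ n < ‖a d‖ * r ^ d

variable {a : ℕ → k} {r : ℝ}

theorem exists_isDominantIndex (hr : 0 < r)
    (ha : Tendsto (fun n ↦ ‖a n‖ * r ^ n) atTop (𝓝 0)) (hnc : ∃ n, 1 ≤ n ∧ a n ≠ 0) :
    ∃ d, IsDominantIndex a r d := by
  obtain ⟨m, hm, ham⟩ := hnc
  obtain ⟨m, rfl⟩ := Nat.exists_eq_add_of_le' hm
  obtain ⟨d, hle, hlt⟩ := exists_last_max_of_tendsto (m := m)
    (ha.comp (tendsto_add_atTop_nat 1)) (mul_pos (norm_pos_iff.2 ham) (pow_pos hr _))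
  refine ⟨d + 1, d.succ_ne_zero, fun n hn ↦ ?_, fun n hn ↦ ?_⟩
  · obtain ⟨n, rfl⟩ := Nat.exists_eq_succ_of_ne_zero hn
    exact hle n
  · obtain ⟨n, rfl⟩ := Nat.exists_eq_succ_of_ne_zero (Nat.ne_zero_of_lt hn)
    exact hlt n (Nat.lt_of_succ_lt_succ hn)

theorem norm_mul_pow_le_of_norm_le {z : k} (hz : ‖z‖ ≤ r) (n : ℕ) :
    ‖a n * z ^ n‖ ≤ ‖a n‖ * r ^ n := by
  rw [norm_mul, norm_pow]
  gcongr

namespace IsDominantIndex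

variable {d : ℕ}

theorem norm_mul_pow_pos (h : IsDominantIndex a r d) (hr : 0 ≤ r) : 0 < ‖a d‖ * r ^ d :=
  (by positivity : 0 ≤ ‖a (d + 1)‖ * r ^ (d + 1)).trans_lt (h.lt (d + 1) d.lt_succ_self)

theorem norm_pos (h : IsDominantIndex a r d) (hr : 0 ≤ r) : 0 < ‖a d‖ :=
  pos_of_mul_pos_left (h.norm_mul_pow_pos hr) (by positivity)

end IsDominantIndex

variable [IsUltrametricDist k]

theorem norm_pow_sub_pow_le {x y : k} (hx : ‖x‖ ≤ r) (hy : ‖y‖ ≤ r) (n : ℕ) :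
    ‖x ^ n - y ^ n‖ ≤ r ^ (n - 1) * ‖x - y‖ := by
  have hr : 0 ≤ r := (norm_nonneg x).trans hx
  rw [← (Commute.all x y).geom_sum₂_mul, norm_mul]
  gcongr
  refine IsUltrametricDist.norm_sum_le_of_forall_le_of_nonneg (by positivity) fun i hi ↦ ?_
  calc ‖x ^ i * y ^ (n - 1 - i)‖ ≤ r ^ i * r ^ (n - 1 - i) := by
        rw [norm_mul, norm_pow, norm_pow]
        gcongr
    _ = r ^ (n - 1) := by
        rw [← pow_add, Nat.add_sub_cancel' (Nat.le_sub_one_of_lt (Finset.mem_range.1 hi))]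

theorem summable_mul_pow_of_norm_le [CompleteSpace k]
    (ha : Tendsto (fun n ↦ ‖a n‖ * r ^ n) atTop (𝓝 0)) {z : k} (hz : ‖z‖ ≤ r) :
    Summable fun n ↦ a n * z ^ n := by
  refine NonarchimedeanAddGroup.summable_of_tendsto_cofinite_zero ?_
  rw [Nat.cofinite_eq_atTop]
  exact squeeze_zero_norm (norm_mul_pow_le_of_norm_le hz) ha

namespace IsDominantIndex

variable {d : ℕ}

theorem norm_sum_sub_sum_le (h : IsDominantIndex a r d) (hr : 0 < r) {x y : k} (hx : ‖x‖ ≤ r)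
    (hy : ‖y‖ ≤ r) (s : Finset ℕ) :
    ‖∑ n ∈ s, a n * x ^ n - ∑ n ∈ s, a n * y ^ n‖ ≤ ‖a d‖ * r ^ d / r * ‖x - y‖ := by
  rw [← Finset.sum_sub_distrib]
  refine IsUltrametricDist.norm_sum_le_of_forall_le_of_nonneg (by positivity) fun n _ ↦ ?_
  rcases eq_or_ne n 0 with rfl | hn
  · simp only [pow_zero, sub_self, norm_zero]
    positivity
  calc ‖a n * x ^ n - a n * y ^ n‖ ≤ ‖a n‖ * (r ^ (n - 1) * ‖x - y‖) := by
        rw [← mul_sub, norm_mul]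
        gcongr
        exact norm_pow_sub_pow_le hx hy n
    _ = ‖a n‖ * r ^ n / r * ‖x - y‖ := by
        rw [← pow_sub_one_mul hn r]
        field_simp
    _ ≤ ‖a d‖ * r ^ d / r * ‖x - y‖ := by
        gcongr ?_ / r * ‖x - y‖
        exact h.le n hn

theorem norm_tsum_sub_le (h : IsDominantIndex a r d) [CompleteSpace k]
    (ha : Tendsto (fun n ↦ ‖a n‖ * r ^ n) atTop (𝓝 0)) {z : k} (hz : ‖z‖ ≤ r) :
    ‖∑' n, a n * z ^ n - a 0‖ ≤ ‖a d‖ * r ^ d := by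
  rw [(summable_mul_pow_of_norm_le ha hz).tsum_eq_zero_add, pow_zero, mul_one,
    add_sub_cancel_left]
  exact IsUltrametricDist.norm_tsum_le_of_forall_le fun n ↦
    (norm_mul_pow_le_of_norm_le hz _).trans (h.le (n + 1) n.succ_ne_zero)

theorem exists_sum_range_eq [IsAlgClosed k] (h : IsDominantIndex a r d) (hr : 0 < r) {N : ℕ}
    (hN : d < N) {w z : k} (hz : ‖z‖ ≤ r)
    (hw : ‖∑ n ∈ Finset.range N, a n * z ^ n - w‖ ≤ ‖a d‖ * r ^ d) :
    ∃ ρ, ‖ρ‖ ≤ r ∧ ∑ n ∈ Finset.range N, a n * ρ ^ n = w ∧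
      ‖ρ - z‖ ^ d * ‖a d‖ ≤ ‖∑ n ∈ Finset.range N, a n * z ^ n - w‖ := by
  set P : k[X] := ∑ n ∈ Finset.range N, C (a n) * X ^ n
  have heval (x : k) : P.eval x = ∑ n ∈ Finset.range N, a n * x ^ n := by
    simp [P, eval_finsetSum]
  have hcoeff (n : ℕ) : P.coeff n = if n < N then a n else 0 := by
    simp [P, coeff_X_pow]
  have hcoeff_d : P.coeff d = a d := by rw [hcoeff, if_pos hN]
  have hderiv : ‖(hasseDeriv d P).eval z‖ = ‖a d‖ := by
    rw [← hcoeff_d]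
    refine norm_eval_hasseDeriv_eq hr (fun n hn ↦ ?_) hz
    rw [hcoeff_d, hcoeff]
    split_ifs
    · exact h.lt n hn
    · simpa using h.norm_mul_pow_pos hr.le
  have had : 0 < ‖a d‖ := h.norm_pos hr.le
  obtain ⟨ρ, hρ, hle⟩ := exists_eval_eq_and_norm_sub_pow_mul_le P h.ne_zero
    (norm_pos_iff.1 (hderiv ▸ had)) w
  rw [hderiv, heval] at hle
  refine ⟨ρ, ?_, heval ρ ▸ hρ, hle⟩
  have hdist : ‖ρ - z‖ ≤ r := by
    rw [← pow_le_pow_iff_left₀ (norm_nonneg _) hr.le h.ne_zero]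
    exact le_of_mul_le_mul_right ((hle.trans hw).trans_eq (mul_comm _ _)) had
  calc ‖ρ‖ = ‖ρ - z + z‖ := by rw [sub_add_cancel]
    _ ≤ max ‖ρ - z‖ ‖z‖ := IsUltrametricDist.norm_add_le_max _ _
    _ ≤ r := max_le hdist hz

theorem exists_seq_sum_range_eq [IsAlgClosed k] (h : IsDominantIndex a r d) (hr : 0 < r) {w : k}
    (hw : ‖a 0 - w‖ ≤ ‖a d‖ * r ^ d) :
    ∃ z : ℕ → k, ∀ n, ‖z n‖ ≤ r ∧ ∑ i ∈ Finset.range (n + (d + 1)), a i * z n ^ i = w ∧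
      ‖z (n + 1) - z n‖ ^ d * ‖a d‖ ≤ ‖a (n + (d + 1))‖ * r ^ (n + (d + 1)) := by
  let S (n : ℕ) := {z : k // ‖z‖ ≤ r ∧ ∑ i ∈ Finset.range (n + (d + 1)), a i * z ^ i = w}
  have start : Nonempty (S 0) := by
    obtain ⟨ρ, hρ, hρw, -⟩ := h.exists_sum_range_eq (N := 0 + (d + 1)) hr (by omega) (z := 0)
      (by simpa using hr.le) (w := w) (by simpa [Finset.sum_range_succ'] using hw)
    exact ⟨ρ, hρ, hρw⟩
  have step (n : ℕ) (z : S n) : ∃ ρ : S (n + 1),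
      ‖ρ.1 - z.1‖ ^ d * ‖a d‖ ≤ ‖a (n + (d + 1))‖ * r ^ (n + (d + 1)) := by
    obtain ⟨z, hz, hzw⟩ := z
    have hval : ∑ i ∈ Finset.range (n + 1 + (d + 1)), a i * z ^ i - w =
        a (n + (d + 1)) * z ^ (n + (d + 1)) := by
      rw [add_right_comm, Finset.sum_range_succ, hzw, add_sub_cancel_left]
    have hle : ‖∑ i ∈ Finset.range (n + 1 + (d + 1)), a i * z ^ i - w‖ ≤
        ‖a (n + (d + 1))‖ * r ^ (n + (d + 1)) :=
      hval ▸ norm_mul_pow_le_of_norm_le hz _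
    obtain ⟨ρ, hρ, hρw, hρz⟩ := h.exists_sum_range_eq hr (by omega) hz
      (hle.trans (h.le _ (by omega)))
    exact ⟨⟨ρ, hρ, hρw⟩, hρz.trans hle⟩
  choose next hnext using step
  let z (n : ℕ) : S n := Nat.rec start.some next n
  exact ⟨fun n ↦ (z n).1, fun n ↦ ⟨(z n).2.1, (z n).2.2, hnext n (z n)⟩⟩

theorem exists_tsum_eq [IsAlgClosed k] [CompleteSpace k] (h : IsDominantIndex a r d) (hr : 0 < r)
    (ha : Tendsto (fun n ↦ ‖a n‖ * r ^ n) atTop (𝓝 0)) {w : k}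
    (hw : ‖a 0 - w‖ ≤ ‖a d‖ * r ^ d) : ∃ z, ‖z‖ ≤ r ∧ ∑' n, a n * z ^ n = w := by
  obtain ⟨z, hz⟩ := h.exists_seq_sum_range_eq hr hw
  have hshift := tendsto_add_atTop_nat (d + 1)
  have hstep : Tendsto (fun n ↦ ‖z (n + 1) - z n‖) atTop (𝓝 0) := by
    refine tendsto_zero_of_tendsto_pow_zero (fun _ ↦ norm_nonneg _) h.ne_zero ?_
    refine squeeze_zero (fun _ ↦ by positivity)
      (fun n ↦ (le_div_iff₀ (h.norm_pos hr.le)).2 (hz n).2.2) ?_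
    simpa using (ha.comp hshift).div_const ‖a d‖
  obtain ⟨y, hzy⟩ := cauchySeq_tendsto_of_complete <|
    NonarchimedeanAddGroup.cauchySeq_of_tendsto_sub_nhds_zero <|
      tendsto_zero_iff_norm_tendsto_zero.2 hstep
  have hy : ‖y‖ ≤ r := le_of_tendsto' hzy.norm fun n ↦ (hz n).1
  refine ⟨y, hy, tendsto_nhds_unique
    ((summable_mul_pow_of_norm_le ha hy).hasSum.tendsto_sum_nat.comp hshift) ?_⟩
  have hbound : Tendsto (fun n ↦ ‖a d‖ * r ^ d / r * ‖y - z n‖) atTop (𝓝 0) := by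
    simpa using (hzy.const_sub y).norm.const_mul (‖a d‖ * r ^ d / r)
  refine tendsto_sub_nhds_zero_iff.1 (squeeze_zero_norm (fun n ↦ ?_) hbound)
  rw [Function.comp_apply, ← (hz n).2.1]
  exact h.norm_sum_sub_sum_le hr hy (hz n).1 _

theorem image_closedBall [IsAlgClosed k] [CompleteSpace k] (h : IsDominantIndex a r d)
    (hr : 0 < r) (ha : Tendsto (fun n ↦ ‖a n‖ * r ^ n) atTop (𝓝 0)) :
    (fun z ↦ ∑' n, a n * z ^ n) '' closedBall 0 r = closedBall (a 0) (‖a d‖ * r ^ d) := by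
  ext w
  simp only [Set.mem_image, mem_closedBall_zero_iff]
  constructor
  · rintro ⟨z, hz, rfl⟩
    exact mem_closedBall_iff_norm.2 (h.norm_tsum_sub_le ha hz)
  · exact fun hw ↦ h.exists_tsum_eq hr ha (mem_closedBall_iff_norm'.1 hw)

end IsDominantIndex

end PowerSeries

theorem open_mapping_general
    {k : Type*} [NormedField k] [IsAlgClosed k] [CompleteSpace k] [IsUltrametricDist k]
    {a : ℕ → k} {r : ℝ} (hr : 0 < r)
    (hdecay : Tendsto (fun n ↦ ‖a n‖ * r ^ n) atTop (𝓝 0))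
    (hnc : ∃ n, 1 ≤ n ∧ a n ≠ 0) {z₀ : k} (hz₀ : ‖z₀‖ ≤ r) :
    ∃ δ : ℝ, 0 < δ ∧
      {w : k | ‖w - ∑' n : ℕ, a n * z₀ ^ n‖ ≤ δ}
        ⊆ (fun z : k ↦ ∑' n : ℕ, a n * z ^ n) '' {z : k | ‖z‖ ≤ r} := by
  obtain ⟨d, hd⟩ := exists_isDominantIndex hr hdecay hnc
  have himage := hd.image_closedBall hr hdecay
  have hmem : ∑' n, a n * z₀ ^ n ∈ closedBall (a 0) (‖a d‖ * r ^ d) :=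
    himage ▸ Set.mem_image_of_mem _ (mem_closedBall_zero_iff.2 hz₀)
  rw [IsUltrametricDist.closedBall_eq_of_mem hmem] at himage
  refine ⟨‖a d‖ * r ^ d, hd.norm_mul_pow_pos hr.le, fun w hw ↦ ?_⟩
  simpa using himage.ge (mem_closedBall_iff_norm.2 hw)

/-- Open mapping: a non-constant power series convergent on the closed disc of
radius `r ∈ |k*|` maps that disc onto a set containing a closed disc around each of
its values. -/
theorem open_mapping
    (k : Type*) [NontriviallyNormedField k] [IsAlgClosed k] [CompleteSpace k]
    [IsUltrametricDist k]
    (a : ℕ → k) (c : k) (hc : c ≠ 0) (r : ℝ) (hr : r = ‖c‖)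
    (hdecay : Tendsto (fun n => ‖a n‖ * r ^ n) atTop (nhds 0))
    (hnc : ∃ n, 1 ≤ n ∧ a n ≠ 0)
    (z₀ : k) (hz₀ : ‖z₀‖ ≤ r) :
    ∃ δ : ℝ, 0 < δ ∧
      {w : k | ‖w - ∑' n : ℕ, a n * z₀ ^ n‖ ≤ δ}
        ⊆ (fun z : k => ∑' n : ℕ, a n * z ^ n) '' {z : k | ‖z‖ ≤ r} :=
  open_mapping_general (hr ▸ norm_pos_iff.2 hc) hdecay hnc hz₀
end
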